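/- arXiv:0908.1872 — 3 statements merged into one kernel-verified Lean document; each statement's English description precedes it below -/
import Mathlib

section
/- Every ℝ-algebra homomorphism from C^∞(ℝ^p, ℝ) ⊗_ℝ Λ(ℝ^q) to ℝ is the composition of evaluation with the augmentation: for every ℝ-algebra homomorphism φ : C^∞(ℝ^p, ℝ) ⊗_ℝ Λ(ℝ^q) → ℝ there exists a unique point x ∈ ℝ^p such that φ(f ⊗ w) = f(x)·ε(w) for all f ∈ C^∞(ℝ^p, ℝ) and w ∈ Λ(ℝ^q). (This is the 'super Milnor exercise' for the superdomain ℝ^{p|q}, whose algebra of global sections is C^∞(ℝ^p, ℝ) ⊗ Λ(ℝ^q).) -/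
/-!
If `ψ` is a character of the algebra of smooth functions on a manifold, then `f - ψ f` lies in its
kernel, so it is not invertible and vanishes somewhere; a sum of squares turns finitely many such
zeros into a common one. Hence the closed sets `{x | f x = ψ f}` have the finite intersection
property. The one belonging to an exhaustion function is compact, so they all share a point `x`,
and `ψ` is evaluation at `x`.

The odd directions contribute nothing: the generators of the exterior algebra square to zero, so
every character of it kills them and is the augmentation.
-/

open scoped Manifold TensorProduct

noncomputable section

/-- The algebra of smooth real-valued functions on `ℝ^p`. -/
abbrev SmoothFn (p : ℕ) : Type :=
  ContMDiffMap (𝓡 p) 𝓘(ℝ, ℝ) (EuclideanSpace ℝ (Fin p)) ℝ (⊤ : ℕ∞)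

open scoped ContDiff

section Spectrum

variable {𝕜 E H M : Type*} [NontriviallyNormedField 𝕜] [NormedAddCommGroup E]
  [NormedSpace 𝕜 E] [TopologicalSpace H] {I : ModelWithCorners 𝕜 E H} [TopologicalSpace M]
  [ChartedSpace H M] {n : ℕ∞ω}

theorem isUnit_contMDiffMap_iff {f : C^n⟮I, M; 𝕜⟯} : IsUnit f ↔ ∀ x, f x ≠ 0 := by
  refine ⟨fun hf x => (hf.map (ContMDiffMap.evalRingHom x)).ne_zero, fun hf => ?_⟩
  let g : C^n⟮I, M; 𝕜⟯ := ⟨fun x => (f x)⁻¹, f.contMDiff.inv₀ hf⟩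
  exact IsUnit.of_mul_eq_one g (ContMDiffMap.ext fun x => mul_inv_cancel₀ (hf x))

theorem spectrum_contMDiffMap_eq_range (f : C^n⟮I, M; 𝕜⟯) : spectrum 𝕜 f = Set.range f := by
  ext r
  have sub_apply (x : M) : (algebraMap 𝕜 C^n⟮I, M; 𝕜⟯ r - f) x = r - f x := rfl
  simp only [spectrum.mem_iff, isUnit_contMDiffMap_iff, sub_apply, sub_ne_zero, not_forall, not_not,
    Set.mem_range, eq_comm]

theorem exists_apply_eq_algHom_apply (ψ : C^n⟮I, M; 𝕜⟯ →ₐ[𝕜] 𝕜) (f : C^n⟮I, M; 𝕜⟯) :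
    ∃ x, f x = ψ f := by
  simpa [spectrum_contMDiffMap_eq_range] using AlgHom.apply_mem_spectrum ψ f

end Spectrum

section Milnor

variable {E H M : Type*} [NormedAddCommGroup E] [NormedSpace ℝ E] [TopologicalSpace H]
  {I : ModelWithCorners ℝ E H} [TopologicalSpace M] [ChartedSpace H M]

theorem exists_forall_mem_finset_apply_eq_algHom_apply {n : ℕ∞ω} (ψ : C^n⟮I, M; ℝ⟯ →ₐ[ℝ] ℝ)
    (s : Finset C^n⟮I, M; ℝ⟯) : ∃ x, ∀ f ∈ s, f x = ψ f := by
  let g : C^n⟮I, M; ℝ⟯ := ∑ f ∈ s, (f - algebraMap ℝ _ (ψ f)) ^ 2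
  have map_g : ψ g = 0 := by simp [g]
  have g_apply (x : M) : g x = ∑ f ∈ s, (f x - ψ f) ^ 2 :=
    map_sum (ContMDiffMap.evalRingHom x) _ s
  obtain ⟨x, hx⟩ := exists_apply_eq_algHom_apply ψ g
  rw [map_g, g_apply, Finset.sum_eq_zero_iff_of_nonneg fun f _ => sq_nonneg _] at hx
  exact ⟨x, fun f hf => sub_eq_zero.mp (pow_eq_zero_iff two_ne_zero |>.mp (hx f hf))⟩

theorem exists_forall_apply_eq_algHom_apply_of_isCompact {n : ℕ∞ω} (ψ : C^n⟮I, M; ℝ⟯ →ₐ[ℝ] ℝ)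
    {h : C^n⟮I, M; ℝ⟯} (hh : IsCompact (h ⁻¹' {ψ h})) : ∃ x, ∀ f, f x = ψ f := by
  classical
  have isClosed_fiber (f : C^n⟮I, M; ℝ⟯) : IsClosed (f ⁻¹' {ψ f}) :=
    isClosed_singleton.preimage f.contMDiff.continuous
  have finite_inter (s : Finset C^n⟮I, M; ℝ⟯) :
      (h ⁻¹' {ψ h} ∩ ⋂ f ∈ s, f ⁻¹' {ψ f}).Nonempty := by
    obtain ⟨x, hx⟩ := exists_forall_mem_finset_apply_eq_algHom_apply ψ (insert h s)
    rw [Finset.forall_mem_insert] at hx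
    exact ⟨x, hx.1, Set.mem_iInter₂.mpr hx.2⟩
  obtain ⟨x, -, hx⟩ := hh.inter_iInter_nonempty _ isClosed_fiber finite_inter
  exact ⟨x, Set.mem_iInter.mp hx⟩

variable [FiniteDimensional ℝ E] [IsManifold I ∞ M] [T2Space M] [SigmaCompactSpace M] {n : ℕ∞}

variable (M I n) in
theorem exists_contMDiffMap_isCompact_preimage_Iic :
    ∃ h : C^n⟮I, M; ℝ⟯, ∀ r, IsCompact (h ⁻¹' Set.Iic r) := by
  have : LocallyCompactSpace M := Manifold.locallyCompact_of_finiteDimensional I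
  let K : CompactExhaustion M := default
  have eventually_find_le (x : M) : ∃ c : ℝ, ∀ᶠ y in nhds x, c ∈ Set.Ici (K.find y : ℝ) := by
    refine ⟨(K.find x + 1 : ℕ), ?_⟩
    filter_upwards [mem_interior_iff_mem_nhds.mp (K.subset_interior_succ _ (K.mem_find x))]
      with y hy
    exact Set.mem_Ici.mpr (Nat.cast_le.mpr (K.mem_iff_find_le.mp hy))
  obtain ⟨h, hh⟩ := exists_contMDiffMap_forall_mem_convex_of_local_const (n := n) I
    (fun x => convex_Ici (K.find x : ℝ)) eventually_find_le
  refine ⟨h, fun r => (K.isCompact ⌊r⌋₊).of_isClosed_subset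
    (isClosed_Iic.preimage h.contMDiff.continuous) fun x hx => ?_⟩
  exact K.mem_iff_find_le.mpr (Nat.le_floor ((hh x).trans hx))

variable (I n) in
theorem exists_contMDiffMap_apply_ne {x y : M} (hxy : x ≠ y) : ∃ f : C^n⟮I, M; ℝ⟯, f x ≠ f y := by
  obtain ⟨f, hx, hy, -⟩ := exists_contMDiffMap_zero_one_of_isClosed (n := n) I
    isClosed_singleton isClosed_singleton (Set.disjoint_singleton.mpr hxy)
  exact ⟨f, by simp [hx rfl, hy rfl]⟩

theorem existsUnique_forall_algHom_apply_eq (ψ : C^n⟮I, M; ℝ⟯ →ₐ[ℝ] ℝ) : ∃! x, ∀ f, ψ f = f x := by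
  obtain ⟨h, hh⟩ := exists_contMDiffMap_isCompact_preimage_Iic M I n
  have isCompact_fiber : IsCompact (h ⁻¹' {ψ h}) :=
    (hh (ψ h)).of_isClosed_subset (isClosed_singleton.preimage h.contMDiff.continuous)
      (Set.preimage_mono (Set.singleton_subset_iff.mpr Set.self_mem_Iic))
  obtain ⟨x, hx⟩ := exists_forall_apply_eq_algHom_apply_of_isCompact ψ isCompact_fiber
  refine ⟨x, fun f => (hx f).symm, fun y hy => ?_⟩
  by_contra hyx
  obtain ⟨f, hf⟩ := exists_contMDiffMap_apply_ne I n hyx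
  exact hf ((hy f).symm.trans (hx f).symm)

end Milnor

section ExteriorAlgebra

variable {R V A B : Type*} [CommRing R] [AddCommGroup V] [Module R V] [Semiring A] [Algebra R A]
  [Semiring B] [Algebra R B] [IsReduced B]

theorem exteriorAlgebra_algHom_apply_ι (χ : ExteriorAlgebra R V →ₐ[R] B) (v : V) :
    χ (ExteriorAlgebra.ι R v) = 0 :=
  IsReduced.eq_zero _ ⟨2, (sq _).trans (ExteriorAlgebra.comp_ι_sq_zero χ v)⟩

theorem exteriorAlgebra_algHom_eq_ofId_comp_algebraMapInv (χ : ExteriorAlgebra R V →ₐ[R] B) :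
    χ = (Algebra.ofId R B).comp ExteriorAlgebra.algebraMapInv := by
  refine ExteriorAlgebra.hom_ext (LinearMap.ext fun v => ?_)
  simp [exteriorAlgebra_algHom_apply_ι, ExteriorAlgebra.algebraMapInv]

theorem algHom_tmul_exteriorAlgebra (φ : A ⊗[R] ExteriorAlgebra R V →ₐ[R] B) (a : A)
    (w : ExteriorAlgebra R V) :
    φ (a ⊗ₜ w) = φ (a ⊗ₜ 1) * algebraMap R B (ExteriorAlgebra.algebraMapInv w) := by
  have map_one_tmul : φ (1 ⊗ₜ w) = algebraMap R B (ExteriorAlgebra.algebraMapInv w) :=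
    DFunLike.congr_fun (exteriorAlgebra_algHom_eq_ofId_comp_algebraMapInv
      (φ.comp Algebra.TensorProduct.includeRight)) w
  rw [← map_one_tmul, ← map_mul, Algebra.TensorProduct.tmul_mul_tmul, mul_one, one_mul]

end ExteriorAlgebra

theorem super_milnor_exercise_general {E H M V : Type*} [NormedAddCommGroup E] [NormedSpace ℝ E]
    [FiniteDimensional ℝ E] [TopologicalSpace H] {I : ModelWithCorners ℝ E H}
    [TopologicalSpace M] [ChartedSpace H M] [IsManifold I ∞ M] [T2Space M] [SigmaCompactSpace M]
    [AddCommGroup V] [Module ℝ V] {n : ℕ∞}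
    (φ : (C^n⟮I, M; ℝ⟯ ⊗[ℝ] ExteriorAlgebra ℝ V) →ₐ[ℝ] ℝ) :
    ∃! x : M, ∀ (f : C^n⟮I, M; ℝ⟯) (w : ExteriorAlgebra ℝ V),
      φ (f ⊗ₜ[ℝ] w) = f x * ExteriorAlgebra.algebraMapInv w := by
  obtain ⟨x, hx, x_unique⟩ :=
    existsUnique_forall_algHom_apply_eq (φ.comp Algebra.TensorProduct.includeLeft)
  refine ⟨x, fun f w => ?_, fun y hy => x_unique y fun f => ?_⟩
  · rw [algHom_tmul_exteriorAlgebra, ← hx f]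
    rfl
  · simpa using hy f 1

/-- Super Milnor's exercise for the superdomain `ℝ^{p|q}`: every `ℝ`-algebra homomorphism
from `C^∞(ℝ^p, ℝ) ⊗ Λ(ℝ^q)` to `ℝ` is the tensor product of an evaluation with the
augmentation, for a unique point `x ∈ ℝ^p`. -/
theorem super_milnor_exercise (p q : ℕ)
    (φ : (SmoothFn p ⊗[ℝ] ExteriorAlgebra ℝ (Fin q → ℝ)) →ₐ[ℝ] ℝ) :
    ∃! x : EuclideanSpace ℝ (Fin p),
      ∀ (f : SmoothFn p) (w : ExteriorAlgebra ℝ (Fin q → ℝ)),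
        φ (f ⊗ₜ[ℝ] w) = f x * ExteriorAlgebra.algebraMapInv w :=
  super_milnor_exercise_general φ
end
end

section
/- (A-points and distributions with point support.) Let x ∈ ℝ^p and k ∈ ℕ. (i) If (A, N) is a Weil algebra with N^{k+1} = 0, φ : C^∞(ℝ^p, ℝ) → A is an ℝ-algebra homomorphism with base point x (i.e. φ(f) − f(x)·1_A ∈ N for all f), and ω : A → ℝ is ℝ-linear, then the linear functional ω ∘ φ vanishes on the ideal power I_x^{k+1}. (ii) Conversely, every ℝ-linear functional v : C^∞(ℝ^p, ℝ) → ℝ vanishing on I_x^{k+1} is of the form ω ∘ φ for some Weil algebra (A, N) with N^{k+1} = 0, some ℝ-algebra homomorphism φ : C^∞(ℝ^p, ℝ) → A with base point x, and some ℝ-linear ω : A → ℝ. -/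
open scoped Manifold

noncomputable section

/-- Evaluation at a point, as an `ℝ`-algebra homomorphism `C^∞(ℝ^p, ℝ) → ℝ`. -/
def evalAlgHom {p : ℕ} (x : EuclideanSpace ℝ (Fin p)) : SmoothFn p →ₐ[ℝ] ℝ where
  toFun f := f x
  map_one' := rfl
  map_mul' _ _ := rfl
  map_zero' := rfl
  map_add' _ _ := rfl
  commutes' _ := rfl

/-- A Weil algebra: a finite-dimensional commutative unital `ℝ`-algebra `A` together with a
nilpotent ideal `N` such that `A = ℝ·1 ⊕ N` as real vector spaces. -/
structure WeilAlgebra where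
  carrier : Type
  [instCommRing : CommRing carrier]
  [instAlgebra : Algebra ℝ carrier]
  [instFinDim : FiniteDimensional ℝ carrier]
  N : Ideal carrier
  nilpotent : IsNilpotent N
  compl : IsCompl (Submodule.span ℝ {(1 : carrier)}) (Submodule.restrictScalars ℝ N)

attribute [instance] WeilAlgebra.instCommRing WeilAlgebra.instAlgebra WeilAlgebra.instFinDim

/-!
A linear functional killing `I_x ^ (k + 1)` factors through the jet algebra
`C^∞(ℝ^p) / I_x ^ (k + 1)`. This algebra carries the character induced by evaluation at `x`, whose
kernel has vanishing `(k + 1)`-st power, so it is a Weil algebra as soon as it is finite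
dimensional. Finite dimensionality holds because `I_x` is finitely generated: writing
`f y - f x = (∫₀¹ Df(x + t(y - x)) dt) (y - x)` and differentiating under the integral sign shows
that the functions `y ↦ y i - x i` generate it (Hadamard's lemma).
-/

universe u

open Function MeasureTheory Topology

section ParametricIntegral

theorem eventually_forall_mem_isCompact_norm_lt {X Y G : Type*} [TopologicalSpace X]
    [TopologicalSpace Y] [SeminormedAddGroup G] {F : X → Y → G} (hF : Continuous (uncurry F))
    {K : Set Y} (hK : IsCompact K) (x : X) : ∃ C, ∀ᶠ x' in 𝓝 x, ∀ y ∈ K, ‖F x' y‖ < C := by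
  obtain ⟨C, hC⟩ := hK.exists_bound_of_continuousOn (hF.uncurry_left x).continuousOn
  refine ⟨C + 1, hK.eventually_forall_of_forall_eventually fun y hy ↦ ?_⟩
  exact hF.norm.continuousAt.eventually_lt_const ((hC y hy).trans_lt (lt_add_one C))

variable {E G : Type u} [NormedAddCommGroup E] [NormedSpace ℝ E] [NormedAddCommGroup G]
  [NormedSpace ℝ G] {F : E → ℝ → G}

theorem contDiff_uncurry_fderiv_left {m n : WithTop ℕ∞} (hF : ContDiff ℝ n (uncurry F))
    (hmn : m + 1 ≤ n) : ContDiff ℝ m (uncurry fun x t ↦ fderiv ℝ (F · t) x) :=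
  ContDiff.fderiv (f := fun (q : E × ℝ) y ↦ F y q.2)
    (hF.comp (contDiff_snd.prodMk (contDiff_snd.comp contDiff_fst))) contDiff_fst hmn

theorem hasFDerivAt_intervalIntegral_of_contDiff (hF : ContDiff ℝ 1 (uncurry F)) (a b : ℝ)
    (x : E) :
    HasFDerivAt (fun x ↦ ∫ t in a..b, F x t) (∫ t in a..b, fderiv ℝ (F · t) x) x := by
  have hF' : Continuous (uncurry fun x t ↦ fderiv ℝ (F · t) x) :=
    (contDiff_uncurry_fderiv_left (m := 0) hF (by simp)).continuous
  have hdiff (t : ℝ) : Differentiable ℝ (F · t) :=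
    (hF.comp (contDiff_id.prodMk contDiff_const)).differentiable one_ne_zero
  obtain ⟨C, hC⟩ := eventually_forall_mem_isCompact_norm_lt hF' (isCompact_uIcc (a := a) (b := b)) x
  exact intervalIntegral.hasFDerivAt_integral_of_dominated_of_fderiv_le
    (F' := fun x t ↦ fderiv ℝ (F · t) x) (bound := fun _ ↦ C) hC
    (.of_forall fun y ↦ (hF.continuous.uncurry_left y).aestronglyMeasurable)
    ((hF.continuous.uncurry_left x).intervalIntegrable a b)
    (hF'.uncurry_left x).aestronglyMeasurable
    (.of_forall fun t ht y hy ↦ (hy t (Set.uIoc_subset_uIcc ht)).le)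
    intervalIntegrable_const
    (.of_forall fun t _ y _ ↦ (hdiff t y).hasFDerivAt)

theorem contDiff_intervalIntegral {n : ℕ∞} (hF : ContDiff ℝ n (uncurry F)) (a b : ℝ) :
    ContDiff ℝ n fun x ↦ ∫ t in a..b, F x t := by
  refine contDiff_iff_forall_nat_le.2 fun m hm ↦ ?_
  replace hF : ContDiff ℝ m (uncurry F) := hF.of_le (mod_cast hm)
  clear hm
  induction m generalizing G with
  | zero =>
    exact contDiff_zero.2 <|
      intervalIntegral.continuous_parametric_intervalIntegral_of_continuous' hF.continuous a b
  | succ m ih =>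
    rw [Nat.cast_succ] at hF ⊢
    exact contDiff_succ_iff_hasFDerivAt.2
      ⟨_, ih (contDiff_uncurry_fderiv_left hF le_rfl),
        hasFDerivAt_intervalIntegral_of_contDiff (hF.of_le le_add_self) a b⟩

end ParametricIntegral

theorem exists_contDiff_eq_add_clm_apply_sub {E F : Type u} [NormedAddCommGroup E] [NormedSpace ℝ E]
    [NormedAddCommGroup F] [NormedSpace ℝ F] [CompleteSpace F] {n : ℕ∞} {f : E → F}
    (hf : ContDiff ℝ (n + 1) f) (x : E) :
    ∃ g : E → E →L[ℝ] F, ContDiff ℝ n g ∧ ∀ y, f y = f x + g y (y - x) := by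
  have hf' : ContDiff ℝ n (fderiv ℝ f) := hf.fderiv_right le_rfl
  refine ⟨fun y ↦ ∫ t in (0 : ℝ)..1, fderiv ℝ f (x + t • (y - x)), ?_, fun y ↦ ?_⟩
  · exact contDiff_intervalIntegral (hf'.comp (by fun_prop)) 0 1
  · have hint : IntervalIntegrable (fun t : ℝ ↦ fderiv ℝ f (x + t • (y - x))) volume 0 1 :=
      (hf'.continuous.comp (by fun_prop)).intervalIntegrable 0 1
    have htaylor := map_add_eq_sum_add_integral_iteratedFDeriv (n := 0) (x := x) (y := y - x)
      fun t _ ↦ (hf.of_le (by simp)).contDiffAt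
    simpa [ContinuousLinearMap.intervalIntegral_apply hint] using htaylor

section MaximalIdeal

variable {p : ℕ} (x : EuclideanSpace ℝ (Fin p))

/-- The coordinate function `π_i - x_i` centred at `x`. -/
def centeredCoord (i : Fin p) : SmoothFn p :=
  ⟨fun y ↦ y i - x i, ContDiff.contMDiff (by fun_prop)⟩

theorem ker_evalAlgHom_eq_span :
    RingHom.ker (evalAlgHom x) = Ideal.span (Set.range (centeredCoord x)) := by
  refine le_antisymm (fun (f : SmoothFn p) (hf : f x = 0) ↦ ?_) (Ideal.span_le.2 ?_)
  · obtain ⟨g, hg, hfg⟩ := exists_contDiff_eq_add_clm_apply_sub (n := ⊤) f.contMDiff.contDiff x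
    let G (i : Fin p) : SmoothFn p :=
      ⟨fun y ↦ g y (EuclideanSpace.single i 1), (hg.clm_apply contDiff_const).contMDiff⟩
    suffices f = ∑ i, G i * centeredCoord x i from
      this ▸ Ideal.sum_mem _ fun i _ ↦
        Ideal.mul_mem_left _ _ (Ideal.subset_span (Set.mem_range_self i))
    ext y
    calc
      f y = g y (y - x) := by rw [hfg, hf, zero_add]
      _ = g y (∑ i, (y i - x i) • EuclideanSpace.single i 1) := by
        congr 1
        ext j
        simp [Pi.single_apply]
      _ = ∑ i, evalAlgHom y (G i * centeredCoord x i) := by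
        simp only [map_sum, map_smul, smul_eq_mul, map_mul]
        exact Finset.sum_congr rfl fun i _ ↦ mul_comm _ _
      _ = (∑ i, G i * centeredCoord x i) y := (map_sum (evalAlgHom y) _ _).symm
  · rintro _ ⟨i, rfl⟩
    exact sub_self (x i)

theorem ker_evalAlgHom_fg : (RingHom.ker (evalAlgHom x)).FG :=
  ker_evalAlgHom_eq_span x ▸ Submodule.fg_span (Set.finite_range _)

end MaximalIdeal

section Jet

variable {K R S : Type*} [CommRing K] [CommRing R] [Algebra K R] [CommRing S] [Algebra K S]

/-- The map that `f` induces on its algebra of `k`-jets `R ⧸ ker f ^ (k + 1)`. For `f` the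
evaluation of smooth functions at a point, it sends a `k`-jet to its value at that point. -/
def jetLift (f : R →ₐ[K] S) (k : ℕ) : R ⧸ RingHom.ker f ^ (k + 1) →ₐ[K] S :=
  Ideal.Quotient.liftₐ _ f fun _ h ↦ Ideal.pow_le_self k.succ_ne_zero h

theorem ker_jetLift (f : R →ₐ[K] S) (k : ℕ) :
    RingHom.ker (jetLift f k) = (RingHom.ker f).map (Ideal.Quotient.mk (RingHom.ker f ^ (k + 1))) :=
  Ideal.ker_quotient_lift f.toRingHom (Ideal.pow_le_self k.succ_ne_zero)

theorem ker_jetLift_pow_eq_bot (f : R →ₐ[K] S) (k : ℕ) :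
    RingHom.ker (jetLift f k) ^ (k + 1) = ⊥ := by
  rw [ker_jetLift, ← Ideal.map_pow, Ideal.map_quotient_self]

theorem finite_quotient_ker_pow_succ [Module.Finite K S] {f : R →ₐ[K] S} (hf : Surjective f)
    (hker : (RingHom.ker f).FG) (k : ℕ) : Module.Finite K (R ⧸ RingHom.ker f ^ (k + 1)) := by
  have hfg : (RingHom.ker (jetLift f k)).FG := ker_jetLift f k ▸ hker.map _
  have hnil : IsNilpotent (RingHom.ker (jetLift f k)) := ⟨k + 1, ker_jetLift_pow_eq_bot f k⟩
  exact Module.finite_of_surjective_of_ker_le_nilradical (jetLift f k)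
    (Ideal.Quotient.lift_surjective_of_surjective _ _ hf)
    (hfg.isNilpotent_iff_le_nilradical.1 hnil) hfg

theorem mk_sub_algebraMap_mem_ker_jetLift (e : R →ₐ[K] K) (k : ℕ) (r : R) :
    Ideal.Quotient.mk _ r - algebraMap K _ (e r) ∈ RingHom.ker (jetLift e k) := by
  rw [RingHom.mem_ker, map_sub, AlgHom.commutes]
  exact sub_self (e r)

theorem map_mem_pow_of_mem_ker_pow {e : R →ₐ[K] K} {φ : R →ₐ[K] S} {N : Ideal S}
    (hφ : ∀ f, φ f - algebraMap K S (e f) ∈ N) {n : ℕ} {f : R} (hf : f ∈ RingHom.ker e ^ n) :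
    φ f ∈ N ^ n := by
  have hker : RingHom.ker e ≤ N.comap φ := fun g (hg : e g = 0) ↦ by
    simpa [hg] using hφ g
  exact Ideal.le_comap_pow φ n (Ideal.pow_right_mono hker n hf)

theorem isCompl_span_one_ker (ε : R →ₐ[K] K) :
    IsCompl (Submodule.span K {(1 : R)}) ((RingHom.ker ε).restrictScalars K) := by
  refine ⟨Submodule.disjoint_def.2 fun a ha (haε : ε a = 0) ↦ ?_,
    codisjoint_iff.2 (eq_top_iff.2 fun a _ ↦ ?_)⟩
  · obtain ⟨c, rfl⟩ := Submodule.mem_span_singleton.1 ha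
    have hc : c = 0 := by simpa using haε
    rw [hc, zero_smul]
  · refine Submodule.mem_sup.2
      ⟨ε a • 1, Submodule.smul_mem _ _ (Submodule.mem_span_singleton_self 1),
        a - ε a • 1, ?_, add_sub_cancel _ _⟩
    simp [RingHom.mem_ker]

end Jet

/-- The Weil algebra given by a finite-dimensional algebra with a character `ε` whose kernel is
nilpotent; that kernel is the ideal `N`. -/
def WeilAlgebra.ofCharacter {A : Type} [CommRing A] [Algebra ℝ A] [FiniteDimensional ℝ A]
    (ε : A →ₐ[ℝ] ℝ) (hε : IsNilpotent (RingHom.ker ε)) : WeilAlgebra where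
  carrier := A
  N := RingHom.ker ε
  nilpotent := hε
  compl := isCompl_span_one_ker ε

theorem A_points_and_distributions_general {R : Type} [CommRing R] [Algebra ℝ R] (e : R →ₐ[ℝ] ℝ)
    (k : ℕ) [FiniteDimensional ℝ (R ⧸ RingHom.ker e ^ (k + 1))] :
    (∀ W : WeilAlgebra, W.N ^ (k + 1) = ⊥ → ∀ φ : R →ₐ[ℝ] W.carrier,
      (∀ f, φ f - algebraMap ℝ W.carrier (e f) ∈ W.N) → ∀ ω : W.carrier →ₗ[ℝ] ℝ,
        ∀ f ∈ RingHom.ker e ^ (k + 1), ω (φ f) = 0) ∧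
    (∀ v : R →ₗ[ℝ] ℝ, (∀ f ∈ RingHom.ker e ^ (k + 1), v f = 0) →
      ∃ (W : WeilAlgebra) (φ : R →ₐ[ℝ] W.carrier) (ω : W.carrier →ₗ[ℝ] ℝ),
        W.N ^ (k + 1) = ⊥ ∧ (∀ f, φ f - algebraMap ℝ W.carrier (e f) ∈ W.N) ∧
        ∀ f, v f = ω (φ f)) := by
  refine ⟨fun W hW φ hφ ω f hf ↦ ?_, fun v hv ↦ ?_⟩
  · have hφf : φ f = 0 := by simpa [hW] using map_mem_pow_of_mem_ker_pow hφ hf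
    rw [hφf, map_zero]
  · have hpow := ker_jetLift_pow_eq_bot e k
    exact ⟨.ofCharacter (jetLift e k) ⟨k + 1, hpow⟩, Ideal.Quotient.mkₐ ℝ _,
      ((RingHom.ker e ^ (k + 1)).restrictScalars ℝ).liftQ v hv, hpow,
      mk_sub_algebraMap_mem_ker_jetLift e k, fun _ ↦ rfl⟩

/-- `A`-points and distributions with point support: (i) if `(A, N)` is a Weil algebra with
`N^{k+1} = 0`, `φ : C^∞(ℝ^p, ℝ) → A` has base point `x`, and `ω : A → ℝ` is linear, then
`ω ∘ φ` kills `I_x^{k+1}`; (ii) conversely, every linear functional killing `I_x^{k+1}` is of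
this form. -/
theorem A_points_and_distributions (p k : ℕ) (x : EuclideanSpace ℝ (Fin p)) :
    (∀ (W : WeilAlgebra), W.N ^ (k + 1) = ⊥ →
      ∀ (φ : SmoothFn p →ₐ[ℝ] W.carrier),
        (∀ f : SmoothFn p, φ f - algebraMap ℝ W.carrier (f x) ∈ W.N) →
        ∀ (ω : W.carrier →ₗ[ℝ] ℝ),
          ∀ f ∈ (RingHom.ker (evalAlgHom x).toRingHom) ^ (k + 1), ω (φ f) = 0) ∧
    (∀ v : SmoothFn p →ₗ[ℝ] ℝ,
      (∀ f ∈ (RingHom.ker (evalAlgHom x).toRingHom) ^ (k + 1), v f = 0) →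
      ∃ (W : WeilAlgebra) (φ : SmoothFn p →ₐ[ℝ] W.carrier) (ω : W.carrier →ₗ[ℝ] ℝ),
        W.N ^ (k + 1) = ⊥ ∧
        (∀ f : SmoothFn p, φ f - algebraMap ℝ W.carrier (f x) ∈ W.N) ∧
        (∀ f : SmoothFn p, v f = ω (φ f))) := by
  have := finite_quotient_ker_pow_succ (f := evalAlgHom x)
    (fun c ↦ ⟨algebraMap ℝ _ c, (evalAlgHom x).commutes c⟩) (ker_evalAlgHom_fg x) k
  exact A_points_and_distributions_general (evalAlgHom x) k
end
end

section
/- (Structure of point-supported distributions of order k.) Let x ∈ ℝ^p and k ∈ ℕ, and let v : C^∞(ℝ^p, ℝ) → ℝ be an ℝ-linear functional vanishing on the ideal power I_x^{k+1}. Then there exist real coefficients a_ν, indexed by the multi-indices ν ∈ ℕ^p with |ν| ≤ k, such that v(f) = Σ_{|ν| ≤ k} a_ν (∂^ν f)(x) for all f ∈ C^∞(ℝ^p, ℝ), where ∂^ν denotes the iterated partial derivative corresponding to ν. -/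
open scoped Manifold

noncomputable section

/-- The partial derivative of `f : ℝ^p → ℝ` in the `i`-th coordinate direction. -/
def pderivCoord (p : ℕ) (i : Fin p) (f : EuclideanSpace ℝ (Fin p) → ℝ) :
    EuclideanSpace ℝ (Fin p) → ℝ :=
  fun y => fderiv ℝ f y (EuclideanSpace.single i 1)

/-- The iterated partial derivative `∂^ν` associated with a multi-index `ν ∈ ℕ^p`. -/
def multiPDeriv (p : ℕ) (ν : Fin p → ℕ) (f : EuclideanSpace ℝ (Fin p) → ℝ) :
    EuclideanSpace ℝ (Fin p) → ℝ :=
  ((List.ofFn fun i : Fin p => (pderivCoord p i)^[ν i]).foldr (· ∘ ·) id) f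

/-!
By linear algebra, `v` is a combination of the finitely many functionals `f ↦ ∂^ν f(x)`, `|ν| ≤ k`,
as soon as it vanishes on their common kernel, so it suffices that this kernel lies in `I_x^{k+1}`.
If `f(x) = 0`, Hadamard's lemma writes `f = ∑ᵢ (πᵢ - xᵢ) gᵢ` with
`gᵢ(y) = ∫₀¹ ∂ᵢf(x + t(y - x)) dt`. Differentiating under the integral sign gives
`∂^ν gᵢ(x) = ∂^{ν + eᵢ} f(x) / (|ν| + 1)`, so the derivatives of `gᵢ` at `x` vanish up to one order
less than those of `f`, and induction on the order shows `gᵢ ∈ I_x^k`.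
-/

open scoped ContDiff Topology
open Set Module

universe u

section SegmentMoment

variable {E F : Type*} [NormedAddCommGroup E] [NormedSpace ℝ E]
  [NormedAddCommGroup F] [NormedSpace ℝ F]

theorem hasFDerivAt_intervalIntegral_of_continuous {G : E → ℝ → F} {G' : E → ℝ → E →L[ℝ] F}
    (hG : Continuous G.uncurry) (hG' : Continuous G'.uncurry)
    (hGG' : ∀ y t, HasFDerivAt (fun z => G z t) (G' y t) y) (a b : ℝ) (y : E) :
    HasFDerivAt (fun z => ∫ t in a..b, G z t) (∫ t in a..b, G' y t) y := by
  obtain ⟨C, hC⟩ := (isCompact_uIcc (a := a) (b := b)).exists_bound_of_continuousOn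
    (hG'.uncurry_left y).continuousOn
  have bound_near : ∀ᶠ z in 𝓝 y, ∀ t ∈ uIcc a b, ‖G' z t‖ ≤ C + 1 := by
    refine isCompact_uIcc.eventually_forall_of_forall_eventually fun t ht => ?_
    have hlt : ‖G' y t‖ < C + 1 := (hC t ht).trans_lt (lt_add_one C)
    have hcont : ContinuousAt (fun z : E × ℝ => ‖G' z.1 z.2‖) (y, t) := hG'.norm.continuousAt
    exact (hcont.eventually_lt_const hlt).mono fun _ => le_of_lt
  refine intervalIntegral.hasFDerivAt_integral_of_dominated_of_fderiv_le (bound := fun _ => C + 1)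
    bound_near (.of_forall fun z => (hG.uncurry_left z).aestronglyMeasurable)
    ((hG.uncurry_left y).intervalIntegrable a b) (hG'.uncurry_left y).aestronglyMeasurable
    (.of_forall fun t ht z hz => hz t (uIoc_subset_uIcc ht)) intervalIntegrable_const
    (.of_forall fun t _ z _ => hGG' z t)

/-- The `n`-th moment `∫₀¹ tⁿ h(x + t(y - x)) dt` of `h` along the segment from `x` to `y`, as a
function of the endpoint `y`. The moments `n = 0` are the coefficients in Hadamard's lemma; the
higher ones arise from these by differentiation. -/
def segmentMoment (x : E) (n : ℕ) (h : E → F) (y : E) : F :=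
  ∫ t in (0 : ℝ)..1, t ^ n • h (x + t • (y - x))

theorem segmentMoment_self [CompleteSpace F] (x : E) (n : ℕ) (h : E → F) :
    segmentMoment x n h x = ((n : ℝ) + 1)⁻¹ • h x := by
  simp [segmentMoment]

theorem hasFDerivAt_segmentMoment (x : E) (n : ℕ) {h : E → F} (hh : ContDiff ℝ 1 h) (y : E) :
    HasFDerivAt (segmentMoment x n h) (segmentMoment x (n + 1) (fderiv ℝ h) y) y := by
  have hc : Continuous h := hh.continuous
  have : Continuous (fderiv ℝ h) := hh.continuous_fderiv one_ne_zero
  refine hasFDerivAt_intervalIntegral_of_continuous (G := fun y t => t ^ n • h (x + t • (y - x)))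
    (G' := fun y t => t ^ (n + 1) • fderiv ℝ h (x + t • (y - x))) (by fun_prop) (by fun_prop)
    (fun z t => ?_) 0 1 y
  have hline : HasFDerivAt (fun z : E => x + t • (z - x)) (t • ContinuousLinearMap.id ℝ E) z :=
    (((hasFDerivAt_id z).sub_const x).const_smul t).const_add x
  have hh' : HasFDerivAt h (fderiv ℝ h (x + t • (z - x))) (x + t • (z - x)) :=
    (hh.differentiable one_ne_zero _).hasFDerivAt
  convert! (hh'.comp z hline).const_smul (t ^ n) using 1
  ext w
  simp [pow_succ, mul_smul]

theorem fderiv_segmentMoment_apply (x : E) (n : ℕ) {h : E → F} (hh : ContDiff ℝ 1 h) (y w : E) :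
    fderiv ℝ (segmentMoment x n h) y w = segmentMoment x (n + 1) (fun z => fderiv ℝ h z w) y := by
  have : Continuous (fderiv ℝ h) := hh.continuous_fderiv one_ne_zero
  rw [(hasFDerivAt_segmentMoment x n hh y).fderiv, segmentMoment,
    ContinuousLinearMap.intervalIntegral_apply (Continuous.intervalIntegrable (by fun_prop) _ _)]
  rfl

theorem segmentMoment_add (x : E) (n : ℕ) {h₁ h₂ : E → F} (hh₁ : Continuous h₁)
    (hh₂ : Continuous h₂) (y : E) :
    segmentMoment x n (h₁ + h₂) y = segmentMoment x n h₁ y + segmentMoment x n h₂ y := by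
  simp only [segmentMoment, Pi.add_apply, smul_add]
  exact intervalIntegral.integral_add (Continuous.intervalIntegrable (by fun_prop) _ _)
    (Continuous.intervalIntegrable (by fun_prop) _ _)

theorem segmentMoment_smul (x : E) (n : ℕ) (c : ℝ) (h : E → F) (y : E) :
    segmentMoment x n (c • h) y = c • segmentMoment x n h y := by
  simp only [segmentMoment, Pi.smul_apply, smul_comm _ c]
  exact intervalIntegral.integral_smul c _

theorem segmentMoment_fderiv_sub [CompleteSpace F] {f : E → F} (hf : ContDiff ℝ 1 f) (x y : E) :
    segmentMoment x 0 (fun z => fderiv ℝ f z (y - x)) y = f y - f x := by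
  have : Continuous (fderiv ℝ f) := hf.continuous_fderiv one_ne_zero
  have hderiv (t : ℝ) : HasDerivAt (fun t : ℝ => f (x + t • (y - x)))
      (fderiv ℝ f (x + t • (y - x)) (y - x)) t := by
    have hline : HasDerivAt (fun t : ℝ => x + t • (y - x)) (y - x) t := by
      simpa using ((hasDerivAt_id t).smul_const (y - x)).const_add x
    exact (hf.differentiable one_ne_zero _).hasFDerivAt.comp_hasDerivAt t hline
  simpa [segmentMoment] using intervalIntegral.integral_eq_sub_of_hasDerivAt (a := 0) (b := 1)
    (fun t _ => hderiv t) (Continuous.intervalIntegrable (by fun_prop) _ _)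

theorem sub_eq_sum_repr_smul_segmentMoment [CompleteSpace F] {ι : Type*} [Fintype ι]
    (b : Basis ι ℝ E) {f : E → F} (hf : ContDiff ℝ 1 f) (x y : E) :
    f y - f x = ∑ i, b.repr (y - x) i • segmentMoment x 0 (fun z => fderiv ℝ f z (b i)) y := by
  have : Continuous (fderiv ℝ f) := hf.continuous_fderiv one_ne_zero
  have hexpand (z : E) : fderiv ℝ f z (y - x) = ∑ i, b.repr (y - x) i • fderiv ℝ f z (b i) := by
    conv_lhs => rw [← b.sum_repr (y - x)]
    simp only [map_sum, map_smul]
  rw [← segmentMoment_fderiv_sub hf, funext hexpand]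
  simp only [segmentMoment, Finset.smul_sum, smul_comm _ (b.repr (y - x) _)]
  rw [intervalIntegral.integral_finsetSum
    fun i _ => Continuous.intervalIntegrable (by fun_prop) _ _]
  simp only [intervalIntegral.integral_smul]

end SegmentMoment

section Smooth

-- `E` and `F` share a universe because induction on the order replaces `F` by `E →L[ℝ] F`.
variable {E F : Type u} [NormedAddCommGroup E] [NormedSpace ℝ E]
  [NormedAddCommGroup F] [NormedSpace ℝ F]

theorem contDiff_segmentMoment_nat (x : E) (m n : ℕ) {h : E → F} (hh : ContDiff ℝ m h) :
    ContDiff ℝ m (segmentMoment x n h) := by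
  induction m generalizing n F with
  | zero =>
    have hc : Continuous h := hh.continuous
    exact contDiff_zero.2 <|
      intervalIntegral.continuous_parametric_intervalIntegral_of_continuous' (by fun_prop) 0 1
  | succ m ih =>
    have hh1 : ContDiff ℝ 1 h := hh.of_le (by simp)
    push_cast at hh ⊢
    exact contDiff_succ_iff_hasFDerivAt.2 ⟨segmentMoment x (n + 1) (fderiv ℝ h),
      ih (n + 1) (hh.fderiv_right le_rfl), hasFDerivAt_segmentMoment x n hh1⟩

theorem contDiff_segmentMoment (x : E) (n : ℕ) {h : E → F} (hh : ContDiff ℝ ∞ h) :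
    ContDiff ℝ ∞ (segmentMoment x n h) :=
  contDiff_infty.2 fun m => contDiff_segmentMoment_nat x m n (contDiff_infty.1 hh m)

end Smooth

section Operators

variable {E F : Type*} [NormedAddCommGroup E] [NormedSpace ℝ E]
  [NormedAddCommGroup F] [NormedSpace ℝ F]

/-- The derivative `f ↦ ∂_w f` in the direction `w`, as an operator on smooth functions. -/
def directionalDeriv (w : E) : End ℝ C^∞⟮𝓘(ℝ, E), E; 𝓘(ℝ, F), F⟯ where
  toFun f := ⟨fun y => fderiv ℝ f y w,
    ((contDiff_infty_iff_fderiv.1 f.contMDiff.contDiff).2.clm_apply contDiff_const).contMDiff⟩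
  map_add' f g := by
    ext y
    have hf : DifferentiableAt ℝ f y := f.contMDiff.contDiff.differentiable (by simp) y
    have hg : DifferentiableAt ℝ g y := g.contMDiff.contDiff.differentiable (by simp) y
    exact congrArg (· w) (fderiv_add hf hg)
  map_smul' c f := by
    ext y
    have hf : DifferentiableAt ℝ f y := f.contMDiff.contDiff.differentiable (by simp) y
    exact congrArg (· w) (fderiv_const_smul hf c)

theorem directionalDeriv_commute (v w : E) :
    Commute (directionalDeriv v : End ℝ C^∞⟮𝓘(ℝ, E), E; 𝓘(ℝ, F), F⟯) (directionalDeriv w) := by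
  refine LinearMap.ext fun f => ?_
  ext y
  have hf : ContDiff ℝ ∞ f := f.contMDiff.contDiff
  have hf' : DifferentiableAt ℝ (fderiv ℝ f) y :=
    (contDiff_infty_iff_fderiv.1 hf).2.differentiable (by simp) y
  have hsymm : IsSymmSndFDerivAt ℝ f y :=
    (contDiff_infty.1 hf 2).contDiffAt.isSymmSndFDerivAt (by simp)
  change fderiv ℝ (fun z => fderiv ℝ f z w) y v = fderiv ℝ (fun z => fderiv ℝ f z v) y w
  rw [fderiv_clm_apply hf' (by fun_prop), fderiv_clm_apply hf' (by fun_prop)]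
  simpa using hsymm.eq v w

end Operators

section MomentOperators

variable {E F : Type u} [NormedAddCommGroup E] [NormedSpace ℝ E]
  [NormedAddCommGroup F] [NormedSpace ℝ F]

/-- `segmentMoment x n` as an operator on smooth functions. -/
def segmentMomentEnd (x : E) (n : ℕ) : End ℝ C^∞⟮𝓘(ℝ, E), E; 𝓘(ℝ, F), F⟯ where
  toFun f := ⟨segmentMoment x n f, (contDiff_segmentMoment x n f.contMDiff.contDiff).contMDiff⟩
  map_add' f g := by
    ext y
    exact segmentMoment_add x n f.contMDiff.continuous g.contMDiff.continuous y
  map_smul' c f := by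
    ext y
    exact segmentMoment_smul x n c f y

theorem directionalDeriv_mul_segmentMomentEnd (x w : E) (n : ℕ) :
    (directionalDeriv w * segmentMomentEnd x n : End ℝ C^∞⟮𝓘(ℝ, E), E; 𝓘(ℝ, F), F⟯) =
      segmentMomentEnd x (n + 1) * directionalDeriv w := by
  refine LinearMap.ext fun f => ?_
  ext y
  exact fderiv_segmentMoment_apply x n (f.contMDiff.contDiff.of_le (by simp)) y w

end MomentOperators

section MultiIndexPow

variable {M : Type*} [Monoid M] {p : ℕ}

/-- The monomial `D^ν = ∏ᵢ Dᵢ^νᵢ` in elements of a monoid that need not be commutative; the factors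
are ordered by increasing index, as in `multiPDeriv`. -/
def multiIndexPow (D : Fin p → M) (ν : Fin p → ℕ) : M :=
  (List.ofFn fun i => D i ^ ν i).prod

theorem multiIndexPow_zero (D : Fin p → M) : multiIndexPow D 0 = 1 := by
  simp [multiIndexPow]

theorem multiIndexPow_succ (D : Fin (p + 1) → M) (ν : Fin (p + 1) → ℕ) :
    multiIndexPow D ν = D 0 ^ ν 0 * multiIndexPow (Fin.tail D) (Fin.tail ν) := by
  simp [multiIndexPow, List.ofFn_succ, Fin.tail]

theorem commute_multiIndexPow {D : Fin p → M} {a : M} (ha : ∀ i, Commute a (D i))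
    (ν : Fin p → ℕ) : Commute a (multiIndexPow D ν) := by
  refine Commute.list_prod_right _ _ fun b hb => ?_
  obtain ⟨i, rfl⟩ := List.mem_ofFn.1 hb
  exact (ha i).pow_right (ν i)

theorem multiIndexPow_add_single {D : Fin p → M} (hD : ∀ i j, Commute (D i) (D j))
    (ν : Fin p → ℕ) (j : Fin p) :
    multiIndexPow D (ν + Pi.single j 1) = multiIndexPow D ν * D j := by
  induction p with
  | zero => exact j.elim0
  | succ p ih =>
    rw [multiIndexPow_succ, multiIndexPow_succ D ν]
    cases j using Fin.cases with
    | zero =>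
      have htail : Fin.tail (ν + Pi.single 0 1) = Fin.tail ν := by
        ext i
        simp [Fin.tail]
      have hcomm : Commute (D 0) (multiIndexPow (Fin.tail D) (Fin.tail ν)) :=
        commute_multiIndexPow (fun i => hD 0 i.succ) _
      rw [htail, Pi.add_apply, Pi.single_eq_same, pow_succ, mul_assoc, mul_assoc, hcomm.eq]
    | succ j =>
      have htail : Fin.tail (ν + Pi.single j.succ 1) = Fin.tail ν + Pi.single j 1 := by
        ext i
        simp [Fin.tail, Pi.single_apply]
      have hzero : (ν + Pi.single j.succ 1 : Fin (p + 1) → ℕ) 0 = ν 0 := by simp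
      rw [htail, hzero, ih (D := Fin.tail D) fun i i' => hD i.succ i'.succ, mul_assoc, Fin.tail]

theorem pow_mul_eq_mul_pow_of_shift {d : M} {A : ℕ → M}
    (hdA : ∀ n, d * A n = A (n + 1) * d) (m n : ℕ) : d ^ m * A n = A (n + m) * d ^ m := by
  induction m with
  | zero => simp
  | succ m ih => rw [pow_succ', mul_assoc, ih, ← mul_assoc, hdA, mul_assoc, add_assoc]

theorem multiIndexPow_mul_of_shift {D : Fin p → M} {A : ℕ → M}
    (hDA : ∀ i n, D i * A n = A (n + 1) * D i) (ν : Fin p → ℕ) (n : ℕ) :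
    multiIndexPow D ν * A n = A (n + ∑ i, ν i) * multiIndexPow D ν := by
  induction p with
  | zero => simp [multiIndexPow]
  | succ p ih =>
    rw [multiIndexPow_succ, mul_assoc, ih (D := Fin.tail D) (fun i => hDA i.succ), ← mul_assoc,
      pow_mul_eq_mul_pow_of_shift (hDA 0), mul_assoc, Fin.sum_univ_succ, add_assoc,
      add_comm (ν 0)]
    rfl

end MultiIndexPow

section MultiIndexDerivative

variable {p : ℕ}

/-- The iterated partial derivative `∂^ν` as an operator on `C^∞(ℝ^p, ℝ)`. -/
def multiPDerivEnd (ν : Fin p → ℕ) : End ℝ (SmoothFn p) :=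
  multiIndexPow (fun i => directionalDeriv (EuclideanSpace.single i 1)) ν

theorem coe_multiPDerivEnd (ν : Fin p → ℕ) (f : SmoothFn p) :
    ⇑(multiPDerivEnd ν f) = multiPDeriv p ν f := by
  have coe_pow (i : Fin p) (n : ℕ) (g : SmoothFn p) :
      ⇑((directionalDeriv (EuclideanSpace.single i 1) ^ n) g) = (pderivCoord p i)^[n] g := by
    have hsemiconj : Function.Semiconj (fun g : SmoothFn p => ⇑g)
        (directionalDeriv (EuclideanSpace.single i 1)) (pderivCoord p i) := fun _ => rfl
    rw [Module.End.pow_apply]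
    exact hsemiconj.iterate_right n g
  rw [multiPDerivEnd, multiIndexPow, multiPDeriv, List.ofFn_eq_map, List.ofFn_eq_map]
  induction List.finRange p with
  | nil => rfl
  | cons i l ih =>
    rw [List.map_cons, List.prod_cons, Module.End.mul_apply, coe_pow, ih]
    rfl

theorem multiPDerivEnd_directionalDeriv (ν : Fin p → ℕ) (i : Fin p) (f : SmoothFn p) :
    multiPDerivEnd ν (directionalDeriv (EuclideanSpace.single i 1) f) =
      multiPDerivEnd (ν + Pi.single i 1) f := by
  rw [multiPDerivEnd, multiPDerivEnd,
    multiIndexPow_add_single fun _ _ => directionalDeriv_commute _ _, Module.End.mul_apply]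

theorem multiPDerivEnd_segmentMomentEnd_self (ν : Fin p → ℕ) (x : EuclideanSpace ℝ (Fin p))
    (f : SmoothFn p) :
    multiPDerivEnd ν (segmentMomentEnd x 0 f) x =
      (((∑ i, ν i : ℕ) : ℝ) + 1)⁻¹ * multiPDerivEnd ν f x := by
  have hshift := multiIndexPow_mul_of_shift (A := segmentMomentEnd x)
    (fun i n => directionalDeriv_mul_segmentMomentEnd (F := ℝ) x (EuclideanSpace.single i 1) n) ν 0
  rw [zero_add] at hshift
  calc multiPDerivEnd ν (segmentMomentEnd x 0 f) x
      = segmentMomentEnd x (∑ i, ν i) (multiPDerivEnd ν f) x :=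
        DFunLike.congr_fun (LinearMap.congr_fun hshift f) x
    _ = _ := segmentMoment_self x _ _

/-- The function `πᵢ - xᵢ`. -/
def coordSub (x : EuclideanSpace ℝ (Fin p)) (i : Fin p) : SmoothFn p :=
  ⟨fun y => y i - x i, ContDiff.contMDiff (by fun_prop)⟩

theorem coordSub_mem_ker (x : EuclideanSpace ℝ (Fin p)) (i : Fin p) :
    coordSub x i ∈ RingHom.ker (evalAlgHom x).toRingHom :=
  sub_self (x i)

theorem eq_sum_coordSub_mul_of_apply_eq_zero {x : EuclideanSpace ℝ (Fin p)} {f : SmoothFn p}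
    (hf : f x = 0) :
    f = ∑ i, coordSub x i *
      segmentMomentEnd x 0 (directionalDeriv (EuclideanSpace.single i 1) f) := by
  ext y
  have h := sub_eq_sum_repr_smul_segmentMoment (EuclideanSpace.basisFun (Fin p) ℝ).toBasis
    (f.contMDiff.contDiff.of_le (by simp)) x y
  change f y = evalAlgHom y _
  rw [map_sum, ← sub_zero (f y), ← hf, h]
  simp only [map_mul, map_sub, Finsupp.coe_sub, Pi.sub_apply, smul_eq_mul,
    OrthonormalBasis.coe_toBasis, OrthonormalBasis.coe_toBasis_repr_apply,
    EuclideanSpace.basisFun_repr, EuclideanSpace.basisFun_apply]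
  rfl

theorem mem_ker_evalAlgHom_pow_of_multiPDerivEnd_eq_zero {x : EuclideanSpace ℝ (Fin p)} {k : ℕ}
    {f : SmoothFn p} (hf : ∀ ν : Fin p → ℕ, ∑ i, ν i < k → multiPDerivEnd ν f x = 0) :
    f ∈ RingHom.ker (evalAlgHom x).toRingHom ^ k := by
  induction k generalizing f with
  | zero => simp
  | succ k ih =>
    have hfx : f x = 0 := by simpa [multiPDerivEnd, multiIndexPow_zero] using hf 0 (by simp)
    rw [eq_sum_coordSub_mul_of_apply_eq_zero hfx, pow_succ']
    refine Ideal.sum_mem _ fun i _ => Ideal.mul_mem_mul (coordSub_mem_ker x i) (ih fun ν hν => ?_)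
    have hdeg : ∑ j, (ν + Pi.single i 1 : Fin p → ℕ) j < k + 1 := by
      simpa [Finset.sum_add_distrib] using hν
    rw [multiPDerivEnd_segmentMomentEnd_self, multiPDerivEnd_directionalDeriv, hf _ hdeg, mul_zero]

end MultiIndexDerivative

/-- Structure of point-supported distributions of order `k`: every linear functional on
`C^∞(ℝ^p, ℝ)` vanishing on `I_x^{k+1}` is a linear combination of iterated partial
derivatives of order at most `k` evaluated at `x`. -/
theorem point_supported_distribution_structure (p k : ℕ) (x : EuclideanSpace ℝ (Fin p))
    (v : SmoothFn p →ₗ[ℝ] ℝ)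
    (hv : ∀ f ∈ (RingHom.ker (evalAlgHom x).toRingHom) ^ (k + 1), v f = 0) :
    ∃ a : (Fin p → Fin (k + 1)) → ℝ,
      ∀ f : SmoothFn p,
        v f = ∑ ν ∈ Finset.univ.filter (fun ν : Fin p → Fin (k + 1) => ∑ i, (ν i : ℕ) ≤ k),
          a ν * multiPDeriv p (fun i => (ν i : ℕ)) f x := by
  let derivAt (ν : Fin p → Fin (k + 1)) : SmoothFn p →ₗ[ℝ] ℝ :=
    (evalAlgHom x).toLinearMap ∘ₗ multiPDerivEnd fun i => ν i
  let indices := Finset.univ.filter fun ν : Fin p → Fin (k + 1) => ∑ i, (ν i : ℕ) ≤ k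
  have hspan : v ∈ Submodule.span ℝ (derivAt '' indices) := by
    rw [image_eq_range]
    refine mem_span_of_iInf_ker_le_ker fun f hf => hv f ?_
    refine mem_ker_evalAlgHom_pow_of_multiPDerivEnd_eq_zero fun ν hν => ?_
    have hlt (i : Fin p) : ν i < k + 1 :=
      (Finset.single_le_sum_of_canonicallyOrdered (Finset.mem_univ i)).trans_lt hν
    have hmem : (fun i => ⟨ν i, hlt i⟩) ∈ indices := by simpa [indices] using Nat.le_of_lt_succ hν
    exact (Submodule.mem_iInf _).1 hf ⟨_, hmem⟩
  obtain ⟨a, ha⟩ := Submodule.mem_span_image_finset_iff_exists_fun' ℝ |>.1 hspan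
  refine ⟨a, fun f => ?_⟩
  simp only [← ha, LinearMap.sum_apply, ← coe_multiPDerivEnd]
  rfl
end
end
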